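/- Let k₁, k₂ be real with 0 < k₁ ≤ k₂, let 0 < c < 1/2, let x₁, x₂ ∈ ℕ, p ∈ ℤ, and y ∈ ℝ. Then both series below converge absolutely and S_{x₂}(y; k₂−k₁+1/2, k₁+k₂−1/2, k₁−k₂+x₁−x₂+1/2) · ∑_{m=0}^∞ [∏_{l=0}^{m−1} ((p+k₁−k₂+1/2+l)² + y)] (c/(c−1))^m / (m! Γ(p+x₂−x₁+1+m)) = ∑_{n=0}^∞ C_n · S_n(y; k₂−k₁+1/2, k₁+k₂−1/2, k₁−k₂+p+1/2) · M_{n+p}(x₁; 2k₁, c) · M_n(x₂; 2k₂, c), where C_n = (−1)^{x₁+x₂} c^{n+x₁} (1−c)^{2k₁+p} (2k₁)_{x₁} (2k₂)_{x₂} / (n! Γ(n+p+1)), 1/Γ is interpreted as 0 at non-positive integers, and a summand on the right with n+p < 0 is interpreted as 0 (consistently with 1/Γ(n+p+1) = 0 there). The left-hand sum is the regularized Gauss hypergeometric series ₂F₁(p+k₁−k₂+1/2+i√y, p+k₁−k₂+1/2−i√y; p+x₂−x₁+1; c/(c−1))/Γ(p+x₂−x₁+1). (This is the paper's general bilinear generating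 function for Meixner polynomials, stated for 0 < c < 1/2 where all series converge absolutely.) -/

import Mathlib

open Finset

/-- Pochhammer symbol `(q)_m = q(q+1)⋯(q+m−1)` for a real `q`. -/
noncomputable def poch (q : ℝ) (m : ℕ) : ℝ := ∏ l ∈ Finset.range m, (q + l)

/-- The continuous dual Hahn polynomial
`S_n(y; a, b, c) = ∑_{j=0}^n (−1)^j (n choose j) (a+b+j)_{n−j} (a+c+j)_{n−j}
  ∏_{l=0}^{j−1} ((a+l)² + y)`. -/
noncomputable def cdHahn (n : ℕ) (y a b c : ℝ) : ℝ :=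
  ∑ j ∈ Finset.range (n + 1),
    (-1 : ℝ) ^ j * (n.choose j : ℝ) * poch (a + b + j) (n - j) * poch (a + c + j) (n - j) *
      ∏ l ∈ Finset.range j, ((a + l) ^ 2 + y)

/-- The Meixner polynomial
`M_n(x; β, c) = ∑_{j=0}^n ((−n)_j (−x)_j/((β)_j j!)) (1 − 1/c)^j = ₂F₁(−n,−x;β;1−1/c)`. -/
noncomputable def meixner (n x : ℕ) (β c : ℝ) : ℝ :=
  ∑ j ∈ Finset.range (n + 1),
    poch (-(n : ℝ)) j * poch (-(x : ℝ)) j / (poch β j * (j.factorial : ℝ)) * (1 - 1 / c) ^ j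

/-! ### Pochhammer symbols and the reciprocal Gamma function -/

lemma poch_zero (q : ℝ) : poch q 0 = 1 := by simp [poch]

lemma poch_succ (q : ℝ) (m : ℕ) : poch q (m + 1) = poch q m * (q + m) := by
  simp [poch, Finset.prod_range_succ]

lemma poch_succ' (q : ℝ) (m : ℕ) : poch q (m + 1) = q * poch (q + 1) m := by
  simp only [poch, Finset.prod_range_succ']
  rw [mul_comm]
  simp only [Nat.cast_zero, add_zero]
  congr 1
  apply Finset.prod_congr rfl
  intro i _
  push_cast
  ring

lemma poch_pos {q : ℝ} (hq : 0 < q) (m : ℕ) : 0 < poch q m := by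
  apply Finset.prod_pos
  intro i _
  positivity

/-- The product `∏_{l<m} ((q+l)²+y)`. -/
noncomputable def pr (q y : ℝ) (m : ℕ) : ℝ := ∏ l ∈ Finset.range m, ((q + l) ^ 2 + y)

lemma pr_zero (q y : ℝ) : pr q y 0 = 1 := by simp [pr]

lemma pr_succ (q y : ℝ) (m : ℕ) : pr q y (m + 1) = pr q y m * ((q + m) ^ 2 + y) := by
  simp [pr, Finset.prod_range_succ]

lemma pr_add (q y : ℝ) (k m : ℕ) : pr q y (k + m) = pr q y k * pr (q + k) y m := by
  induction m with
  | zero => simp [pr_zero]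
  | succ m ih =>
    rw [← add_assoc, pr_succ, ih, pr_succ]
    push_cast
    ring

/-- `1/Γ` at integers. -/
noncomputable def ig (m : ℤ) : ℝ := (Real.Gamma (m : ℝ))⁻¹

lemma ig_nonpos {m : ℤ} (hm : m ≤ 0) : ig m = 0 := by
  obtain ⟨k, hk⟩ := Int.exists_eq_neg_ofNat hm
  subst hk
  simp [ig, Real.Gamma_neg_nat_eq_zero]

lemma ig_succ (m : ℤ) : ig (m + 1) * m = ig m := by
  rcases eq_or_ne m 0 with h | h
  · subst h; simp [ig]
  · have : (m : ℝ) ≠ 0 := by exact_mod_cast h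
    unfold ig
    push_cast
    rw [Real.Gamma_add_one this, mul_inv]
    field_simp

lemma ig_pos {m : ℤ} (hm : 0 < m) : 0 < ig m := by
  unfold ig
  have : (0 : ℝ) < m := by exact_mod_cast hm
  have := Real.Gamma_pos_of_pos this
  positivity

lemma ig_nonneg (m : ℤ) : 0 ≤ ig m := by
  rcases le_or_gt m 0 with h | h
  · rw [ig_nonpos h]
  · exact (ig_pos h).le

lemma ig_poch (m : ℤ) (r : ℕ) : poch (m : ℝ) r * ig (m + r) = ig m := by
  induction r with
  | zero => simp [poch_zero]
  | succ r ih =>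
    rw [poch_succ, ← ih, ← ig_succ (m + r)]
    push_cast
    rw [add_assoc]
    ring

/-! ### Continuous dual Hahn polynomials -/

/-- coefficients -/
noncomputable def sc (q₁ q₂ : ℝ) (n j : ℕ) : ℝ :=
  (-1 : ℝ) ^ j * (n.choose j : ℝ) * poch (q₁ + j) (n - j) * poch (q₂ + j) (n - j)

lemma cdHahn_eq (n : ℕ) (y a b d : ℝ) :
    cdHahn n y a b d = ∑ j ∈ Finset.range (n + 1), sc (a + b) (a + d) n j * pr a y j := rfl

lemma sc_gt (q₁ q₂ : ℝ) {n j : ℕ} (h : n < j) : sc q₁ q₂ n j = 0 := by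
  simp [sc, Nat.choose_eq_zero_of_lt h]

lemma sc_self (q₁ q₂ : ℝ) (n : ℕ) : sc q₁ q₂ n n = (-1) ^ n := by
  simp [sc, poch_zero]

lemma sc_add (q₁ q₂ : ℝ) (j r : ℕ) : sc q₁ q₂ (j + r) j =
    (-1 : ℝ) ^ j * (((j + r).factorial : ℝ) / ((j.factorial : ℝ) * (r.factorial : ℝ)))
      * poch (q₁ + j) r * poch (q₂ + j) r := by
  unfold sc
  rw [Nat.add_sub_cancel_left, Nat.cast_add_choose]

lemma sc_rec_zero (q₁ q₂ a : ℝ) (n : ℕ) :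
    sc q₁ q₂ (n + 2) 0 =
      ((n + 1 + q₁) * (n + 1 + q₂) + (n + 1) * (n + q₁ + q₂ - 2 * a)) * sc q₁ q₂ (n + 1) 0
      - (n + q₁) * (n + q₂) * ((n + 1) * (n + q₁ + q₂ - 2 * a)) * sc q₁ q₂ n 0 := by
  simp only [sc, Nat.sub_zero, poch_succ, Nat.choose_zero_right]
  push_cast
  ring

lemma sc_rec (q₁ q₂ a : ℝ) (n j : ℕ) :
    sc q₁ q₂ (n + 2) (j + 1) =
      ((n + 1 + q₁) * (n + 1 + q₂) + (n + 1) * (n + q₁ + q₂ - 2 * a)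
          + 2 * a * (j + 1) + (j + 1) ^ 2) * sc q₁ q₂ (n + 1) (j + 1)
      - sc q₁ q₂ (n + 1) j
      - (n + q₁) * (n + q₂) * ((n + 1) * (n + q₁ + q₂ - 2 * a)) * sc q₁ q₂ n (j + 1) := by
  rcases lt_trichotomy j n with h | h | h
  · obtain ⟨r, rfl⟩ : ∃ r, n = j + 1 + r := ⟨n - (j + 1), by omega⟩
    have e1 : j + 1 + r + 2 = (j + 1) + (r + 2) := by ring
    have e2 : j + 1 + r + 1 = (j + 1) + (r + 1) := by ring
    have e3 : sc q₁ q₂ (j + 1 + r + 1) j = sc q₁ q₂ (j + (r + 2)) j := by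
      congr 1; ring
    rw [e3, e1, e2]
    simp only [sc_add]
    have f1 : j + (r + 2) = (j + 1 + r) + 1 := by ring
    have f2 : j + 1 + (r + 2) = (j + 1 + r) + 1 + 1 := by ring
    have f3 : j + 1 + (r + 1) = (j + 1 + r) + 1 := by ring
    rw [f1, f2, f3]
    have g1 : poch (q₁ + j) (r + 2) = (q₁ + j) * poch (q₁ + (j + 1 : ℕ)) (r + 1) := by
      rw [poch_succ']; push_cast; ring_nf
    have g2 : poch (q₂ + j) (r + 2) = (q₂ + j) * poch (q₂ + (j + 1 : ℕ)) (r + 1) := by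
      rw [poch_succ']; push_cast; ring_nf
    rw [g1, g2]
    simp only [poch_succ, Nat.factorial_succ]
    generalize poch (q₁ + (j + 1 : ℕ)) r = P1
    generalize poch (q₂ + (j + 1 : ℕ)) r = P2
    have h1 : ((j.factorial : ℕ) : ℝ) ≠ 0 := by positivity
    have h2 : ((r.factorial : ℕ) : ℝ) ≠ 0 := by positivity
    have h3 : ((r : ℝ) + 1) ≠ 0 := by positivity
    have h4 : ((r : ℝ) + 1 + 1) ≠ 0 := by positivity
    have h5 : ((j : ℝ) + 1) ≠ 0 := by positivity
    push_cast
    field_simp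
    ring
  · subst h
    rw [sc_gt _ _ (show j < j + 1 by omega), sc_self]
    simp only [sc]
    rw [show j + 2 - (j + 1) = 1 by omega, show j + 1 - j = 1 by omega,
      show j + 2 = (j + 1) + 1 by ring, Nat.choose_succ_self_right, Nat.choose_succ_self_right]
    simp only [poch, Finset.prod_range_one]
    push_cast
    ring
  · rcases (show j = n + 1 ∨ n + 1 < j by omega) with h' | h'
    · subst h'
      rw [sc_gt _ _ (show n + 1 < n + 1 + 1 by omega), sc_gt _ _ (show n < n + 1 + 1 by omega),
        sc_self, show n + 1 + 1 = n + 2 by ring, sc_self]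
      ring
    · rw [sc_gt _ _ (show n + 2 < j + 1 by omega), sc_gt _ _ (show n + 1 < j + 1 by omega),
        sc_gt _ _ (show n + 1 < j by omega), sc_gt _ _ (show n < j + 1 by omega)]
      ring

lemma cdHahn_zero (y a b d : ℝ) : cdHahn 0 y a b d = 1 := by
  simp [cdHahn, poch_zero]

/-- Three-term recurrence for the continuous dual Hahn polynomials. -/
lemma cdHahn_rec (n : ℕ) (y a b d : ℝ) :
    cdHahn (n + 1) y a b d =
      (2 * n ^ 2 + n * (2 * a + 2 * b + 2 * d - 1) + a * b + a * d + b * d - y) * cdHahn n y a b d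
      - n * (n - 1 + a + b) * (n - 1 + a + d) * (n - 1 + b + d) * cdHahn (n - 1) y a b d := by
  cases n with
  | zero =>
    simp [cdHahn, Finset.sum_range_succ, poch]
    ring
  | succ n =>
    have key : ∀ j, pr a y (j + 1) = pr a y j * ((a + j) ^ 2 + y) := pr_succ a y
    simp only [cdHahn_eq, Nat.add_sub_cancel]
    have e1 : ∑ j ∈ Finset.range (n + 1), sc (a + b) (a + d) n j * pr a y j
        = ∑ j ∈ Finset.range (n + 1 + 1 + 1), sc (a + b) (a + d) n j * pr a y j := by
      rw [Finset.sum_range_succ _ (n + 1 + 1), Finset.sum_range_succ _ (n + 1),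
        sc_gt _ _ (show n < n + 1 by omega), sc_gt _ _ (show n < n + 1 + 1 by omega)]
      ring
    have e2 : ∑ j ∈ Finset.range (n + 1 + 1), sc (a + b) (a + d) (n + 1) j * pr a y j
        = ∑ j ∈ Finset.range (n + 1 + 1 + 1), sc (a + b) (a + d) (n + 1) j * pr a y j := by
      rw [Finset.sum_range_succ _ (n + 1 + 1), sc_gt _ _ (show n + 1 < n + 1 + 1 by omega)]
      ring
    have e3 : y * ∑ j ∈ Finset.range (n + 1 + 1), sc (a + b) (a + d) (n + 1) j * pr a y j
        = ∑ j ∈ Finset.range (n + 1 + 1), sc (a + b) (a + d) (n + 1) j * pr a y (j + 1)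
          - ∑ j ∈ Finset.range (n + 1 + 1 + 1),
            (a + j) ^ 2 * (sc (a + b) (a + d) (n + 1) j * pr a y j) := by
      rw [Finset.sum_range_succ _ (n + 1 + 1), sc_gt _ _ (show n + 1 < n + 1 + 1 by omega),
        Finset.mul_sum]
      simp only [zero_mul, mul_zero, add_zero]
      rw [← Finset.sum_sub_distrib]
      apply Finset.sum_congr rfl
      intro j _
      rw [key]
      ring
    rw [sub_mul, e3, e1, e2]
    simp only [Finset.sum_range_succ' _ (n + 1 + 1), mul_add, Finset.mul_sum]
    rw [show n + 1 + 1 = n + 2 by ring, sc_rec_zero _ _ a]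
    simp only [sc_rec _ _ a]
    rw [← sub_eq_zero]
    have : ∀ A B C D E A' C' D' E' : ℝ, A + A' - (C + C' - (B - (D + D')) - (E + E')) =
      (A + B - C - D + E) + (A' - C' - D' + E') := by intros; ring
    rw [this, ← Finset.sum_add_distrib, ← Finset.sum_sub_distrib, ← Finset.sum_sub_distrib,
      ← Finset.sum_add_distrib, Finset.sum_eq_zero, zero_add]
    · push_cast
      ring
    · intro j _
      push_cast
      ring

lemma cdHahn_symm (n : ℕ) (y a b d : ℝ) : cdHahn n y a b d = cdHahn n y d b a := by
  induction n using Nat.strong_induction_on with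
  | _ n ih =>
    cases n with
    | zero => simp [cdHahn_zero]
    | succ n =>
      rw [cdHahn_rec, cdHahn_rec, ih n (by omega), ih (n - 1) (by omega)]
      ring

/-! ### Meixner polynomials -/

lemma poch_neg (n j : ℕ) : poch (-(n : ℝ)) j = (-1) ^ j * (n.descFactorial j : ℝ) := by
  induction j with
  | zero => simp [poch_zero]
  | succ j ih =>
    rw [poch_succ, ih, Nat.descFactorial_succ]
    rcases le_or_gt j n with h | h
    · push_cast [Nat.cast_sub h]; ring
    · rw [Nat.descFactorial_eq_zero_iff_lt.2 h]; simp

lemma df_succ (n j : ℕ) : (n.descFactorial (j + 1) : ℝ) = (n - j) * n.descFactorial j := by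
  rw [Nat.descFactorial_succ]
  rcases le_or_gt j n with h | h
  · push_cast [Nat.cast_sub h]; ring
  · rw [Nat.descFactorial_eq_zero_iff_lt.2 h]; simp

lemma df_pred (n j : ℕ) : (n : ℝ) * ((n - 1).descFactorial j : ℝ) = n.descFactorial (j + 1) := by
  cases n with
  | zero => simp
  | succ n => rw [Nat.succ_descFactorial_succ]; push_cast; simp

lemma df_up (x j : ℕ) : ((x + 1).descFactorial (j + 1) : ℝ) =
    x.descFactorial (j + 1) + (j + 1) * x.descFactorial j := by
  rw [Nat.succ_descFactorial_succ, df_succ]; push_cast; ring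

/-- Meixner coefficient. -/
noncomputable def mg (β t : ℝ) (j : ℕ) : ℝ := t ^ j / (poch β j * (j.factorial : ℝ))

lemma mg_succ {β : ℝ} (hβ : 0 < β) (t : ℝ) (j : ℕ) :
    (β + j) * (j + 1) * mg β t (j + 1) = t * mg β t j := by
  unfold mg
  have h1 := (poch_pos hβ j).ne'
  have h2 : β + j ≠ 0 := by positivity
  have h3 : ((j.factorial : ℕ) : ℝ) ≠ 0 := by positivity
  rw [poch_succ, Nat.factorial_succ]
  push_cast
  have h5 : ((j : ℝ) + 1) ≠ 0 := by positivity
  field_simp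
  ring

lemma meixner_eq_of_lt (n x L : ℕ) (β c : ℝ) (hL : n < L) : meixner n x β c =
    ∑ j ∈ Finset.range L, mg β (1 - 1 / c) j * n.descFactorial j * x.descFactorial j := by
  have : meixner n x β c =
    ∑ j ∈ Finset.range (n + 1), mg β (1 - 1 / c) j * n.descFactorial j * x.descFactorial j := by
    unfold meixner mg
    apply Finset.sum_congr rfl
    intro j _
    rw [poch_neg, poch_neg]
    have : ((-1 : ℝ) ^ j) * (-1) ^ j = 1 := by rw [← mul_pow]; simp
    linear_combination ((n.descFactorial j : ℝ) * (x.descFactorial j) / (poch β j * j.factorial) *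
      (1 - 1 / c) ^ j) * this
  rw [this]
  apply Finset.sum_subset
  · intro i; simp only [Finset.mem_range]; omega
  · intro j _ hj
    simp only [Finset.mem_range] at hj
    rw [Nat.descFactorial_eq_zero_iff_lt.2 (show n < j by omega)]; simp

lemma meixner_eq_of_lt' (n x L : ℕ) (β c : ℝ) (hL : x < L) : meixner n x β c =
    ∑ j ∈ Finset.range L, mg β (1 - 1 / c) j * n.descFactorial j * x.descFactorial j := by
  rw [meixner_eq_of_lt n x (L + n) β c (by omega)]
  symm
  apply Finset.sum_subset
  · intro i; simp only [Finset.mem_range]; omega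
  · intro j _ hj
    simp only [Finset.mem_range] at hj
    rw [Nat.descFactorial_eq_zero_iff_lt.2 (show x < j by omega)]; simp

lemma meixner_symm (n x : ℕ) (β c : ℝ) : meixner n x β c = meixner x n β c := by
  rw [meixner_eq_of_lt n x (n + 1) β c (by omega), meixner_eq_of_lt' x n (n + 1) β c (by omega)]
  apply Finset.sum_congr rfl
  intro j _
  ring

lemma meixner_zero_right (n : ℕ) (β c : ℝ) : meixner n 0 β c = 1 := by
  rw [meixner_eq_of_lt' n 0 1 β c (by omega)]
  simp [mg, poch_zero]

lemma meixner_R1 (n x : ℕ) {β c : ℝ} (hβ : 0 < β) :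
    (x + β) * meixner n (x + 1) β c =
      (x + β + n) * meixner n x β c - n / c * meixner (n - 1) x β c := by
  rw [meixner_eq_of_lt n (x + 1) (n + 1) β c (by omega),
    meixner_eq_of_lt n x (n + 1) β c (by omega),
    meixner_eq_of_lt (n - 1) x (n + 1) β c (by omega)]
  set t := 1 - 1 / c with ht
  have key : ∀ L : ℕ, (x + β) * ∑ j ∈ Finset.range (L + 1),
        mg β t j * n.descFactorial j * (x + 1).descFactorial j =
      (x + β + n) * ∑ j ∈ Finset.range (L + 1), mg β t j * n.descFactorial j * x.descFactorial j
       - n / c * ∑ j ∈ Finset.range (L + 1),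
        mg β t j * (n - 1).descFactorial j * x.descFactorial j
       - t * mg β t L * n.descFactorial (L + 1) * x.descFactorial L := by
    intro L
    induction L with
    | zero =>
      simp [mg, poch_zero, ht]
      ring
    | succ L ih =>
      simp only [Finset.sum_range_succ _ (L + 1), mul_add]
      rw [ih]
      have h1 := df_pred n (L + 1)
      have h2 := df_up x L
      have h3 := df_succ n (L + 1)
      have h4 := df_succ x L
      have h5 := mg_succ hβ t L
      rw [h2]
      have h6 : (n : ℝ) / c * (mg β t (L + 1) * ((n - 1).descFactorial (L + 1) : ℝ)
          * (x.descFactorial (L + 1) : ℝ)) = (1 - t) * (mg β t (L + 1) *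
            (n.descFactorial (L + 2) : ℝ) * (x.descFactorial (L + 1) : ℝ)) := by
        rw [← h1, ht]; ring
      rw [h6, ← h5, h3, h4]
      push_cast
      ring
  rw [key n, Nat.descFactorial_eq_zero_iff_lt.2 (show n < n + 1 by omega)]
  simp

lemma meixner_R2 (n x : ℕ) (β c : ℝ) :
    n * meixner n x β c - n * meixner (n - 1) x β c =
      x * meixner n x β c - x * meixner n (x - 1) β c := by
  rw [meixner_eq_of_lt n (x - 1) (n + 1) β c (by omega),
    meixner_eq_of_lt n x (n + 1) β c (by omega),
    meixner_eq_of_lt (n - 1) x (n + 1) β c (by omega)]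
  simp only [Finset.mul_sum]
  rw [← Finset.sum_sub_distrib, ← Finset.sum_sub_distrib]
  apply Finset.sum_congr rfl
  intro j _
  have h1 := df_pred n j
  have h2 := df_pred x j
  rw [df_succ] at h1 h2
  linear_combination (-mg β (1 - 1 / c) j * x.descFactorial j) * h1 +
    (mg β (1 - 1 / c) j * n.descFactorial j) * h2

lemma meixner_R3 (n x : ℕ) {β c : ℝ} (hβ : 0 < β) :
    (n + β) * meixner (n + 1) x β c =
      ((1 - 1 / c) * (x - n) + 2 * n + β) * meixner n x β c - n / c * meixner (n - 1) x β c := by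
  have h1 := meixner_R1 x n (c := c) hβ
  rw [meixner_symm x (n + 1), meixner_symm x n, meixner_symm (x - 1) n] at h1
  have h2 := meixner_R2 n x β c
  linear_combination h1 + (-1 / c) * h2

lemma meixner_bracket (n N x₁ x₂ : ℕ) {β₁ β₂ c : ℝ} (h₁ : 0 < β₁) (h₂ : 0 < β₂) (hc : 0 < c) :
    (2 * n * N + n * β₁ + N * β₂) * (meixner N x₁ β₁ c * meixner n x₂ β₂ c)
      - N * n / c * (meixner (N - 1) x₁ β₁ c * meixner (n - 1) x₂ β₂ c)
      - c * (n + β₂) * (N + β₁) * (meixner (N + 1) x₁ β₁ c * meixner (n + 1) x₂ β₂ c)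
    = - c * (x₁ + β₁) * (x₂ + β₂) * (meixner N (x₁ + 1) β₁ c * meixner n (x₂ + 1) β₂ c)
      + (2 * x₁ * x₂ + x₂ * β₁ + x₁ * β₂) * (meixner N x₁ β₁ c * meixner n x₂ β₂ c)
      - x₁ * x₂ / c * (meixner N (x₁ - 1) β₁ c * meixner n (x₂ - 1) β₂ c) := by
  have a1 := meixner_R1 N x₁ (c := c) h₁
  have a2 := meixner_R2 N x₁ β₁ c
  have a3 := meixner_R3 N x₁ (c := c) h₁
  have b1 := meixner_R1 n x₂ (c := c) h₂
  have b2 := meixner_R2 n x₂ β₂ c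
  have b3 := meixner_R3 n x₂ (c := c) h₂
  generalize meixner N x₁ β₁ c = f at *
  generalize meixner n x₂ β₂ c = g at *
  generalize meixner (N - 1) x₁ β₁ c = fm at *
  generalize meixner (n - 1) x₂ β₂ c = gm at *
  have a2' : x₁ * meixner N (x₁ - 1) β₁ c = (x₁ - N) * f + N * fm := by linear_combination a2
  have b2' : x₂ * meixner n (x₂ - 1) β₂ c = (x₂ - n) * g + n * gm := by linear_combination b2
  have e1 : c * (n + β₂) * (N + β₁) * (meixner (N + 1) x₁ β₁ c * meixner (n + 1) x₂ β₂ c) =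
    c * ((N + β₁) * meixner (N + 1) x₁ β₁ c) * ((n + β₂) * meixner (n + 1) x₂ β₂ c) := by ring
  have e2 : - c * (x₁ + β₁) * (x₂ + β₂) * (meixner N (x₁ + 1) β₁ c * meixner n (x₂ + 1) β₂ c) =
    - c * ((x₁ + β₁) * meixner N (x₁ + 1) β₁ c) * ((x₂ + β₂) * meixner n (x₂ + 1) β₂ c) := by ring
  have e3 : x₁ * x₂ / c * (meixner N (x₁ - 1) β₁ c * meixner n (x₂ - 1) β₂ c) =
    (x₁ * meixner N (x₁ - 1) β₁ c) * (x₂ * meixner n (x₂ - 1) β₂ c) / c := by ring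
  rw [e1, e2, e3, a1, a2', a3, b1, b2', b3]
  field_simp
  ring

/-! ### Analysis: binomial series, polynomial bounds -/

lemma HasSum.congr_fun' {f g : ℕ → ℝ} {s : ℝ} (h : HasSum f s) (e : ∀ n, g n = f n) :
    HasSum g s := by
  have : g = f := funext e
  rw [this]
  exact h

lemma hasSum_binom (α : ℝ) {c : ℝ} (hc0 : 0 ≤ c) (hc : c < 1) :
    HasSum (fun r : ℕ => poch α r / (r.factorial : ℝ) * c ^ r) ((1 - c) ^ (-α)) := by
  have h := (Real.one_div_one_sub_rpow_hasFPowerSeriesOnBall_zero α).hasSum (y := c) (by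
    simp only [Metric.mem_eball, edist_zero_right]
    rw [← ofReal_norm, Real.norm_of_nonneg hc0]
    simpa using hc)
  simp only [FormalMultilinearSeries.ofScalars_apply_eq, zero_add] at h
  rw [Real.rpow_neg (by linarith), ← one_div]
  refine HasSum.congr_fun' h (fun r => ?_)
  rw [smul_eq_mul]
  congr 1
  have h1 := Ring.factorial_nsmul_multichoose_eq_ascPochhammer α r
  have h2 : Ring.choose (α + r - 1) r = Ring.multichoose α r := by
    rw [Ring.choose]
    congr 1
    ring
  rw [h2, div_eq_iff (by positivity), mul_comm, ← nsmul_eq_mul, h1]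
  rw [Polynomial.ascPochhammer_smeval_eq_eval]
  clear h h1 h2
  induction r with
  | zero => simp [poch_zero]
  | succ r ih => rw [poch_succ, ih, ascPochhammer_succ_eval]

/-- polynomially bounded sequences -/
def PB (m : ℕ → ℝ) : Prop := ∃ K : ℝ, 0 ≤ K ∧ ∃ D : ℕ, ∀ n : ℕ, |m n| ≤ K * ((n : ℝ) + 1) ^ D

lemma PB.const (k : ℝ) : PB (fun _ => k) := ⟨|k|, abs_nonneg _, 0, fun n => by simp⟩

lemma PB.id : PB (fun n => (n : ℝ)) := ⟨1, zero_le_one, 1, fun n => by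
  rw [abs_of_nonneg (by positivity)]; simp⟩

lemma PB.mul {m m' : ℕ → ℝ} (h : PB m) (h' : PB m') : PB (fun n => m n * m' n) := by
  obtain ⟨K, hK, D, hD⟩ := h
  obtain ⟨K', hK', D', hD'⟩ := h'
  refine ⟨K * K', mul_nonneg hK hK', D + D', fun n => ?_⟩
  rw [abs_mul]
  calc |m n| * |m' n| ≤ (K * ((n : ℝ) + 1) ^ D) * (K' * ((n : ℝ) + 1) ^ D') :=
        mul_le_mul (hD n) (hD' n) (abs_nonneg _) (by positivity)
    _ = _ := by ring

lemma PB.add {m m' : ℕ → ℝ} (h : PB m) (h' : PB m') : PB (fun n => m n + m' n) := by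
  obtain ⟨K, hK, D, hD⟩ := h
  obtain ⟨K', hK', D', hD'⟩ := h'
  refine ⟨K + K', add_nonneg hK hK', D + D', fun n => ?_⟩
  have h1 : (1 : ℝ) ≤ (n : ℝ) + 1 := by simp
  have e1 : ((n : ℝ) + 1) ^ D ≤ ((n : ℝ) + 1) ^ (D + D') := pow_le_pow_right₀ h1 (by omega)
  have e2 : ((n : ℝ) + 1) ^ D' ≤ ((n : ℝ) + 1) ^ (D + D') := pow_le_pow_right₀ h1 (by omega)
  calc |m n + m' n| ≤ |m n| + |m' n| := abs_add_le _ _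
    _ ≤ (K * ((n : ℝ) + 1) ^ D) + (K' * ((n : ℝ) + 1) ^ D') := add_le_add (hD n) (hD' n)
    _ ≤ (K * ((n : ℝ) + 1) ^ (D + D')) + (K' * ((n : ℝ) + 1) ^ (D + D')) := by gcongr
    _ = _ := by ring

lemma PB.sum {ι : Type*} (s : Finset ι) {m : ι → ℕ → ℝ} (h : ∀ i ∈ s, PB (m i)) :
    PB (fun n => ∑ i ∈ s, m i n) := by
  classical
  induction s using Finset.induction_on with
  | empty => simpa using PB.const 0
  | insert a s ha ih =>
    simp only [Finset.sum_insert ha]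
    exact (h a (by simp)).add (ih (fun i hi => h i (by simp [hi])))

lemma PB.comp {m : ℕ → ℝ} (h : PB m) (φ : ℕ → ℕ) (q : ℕ) (hφ : ∀ n, φ n ≤ n + q) :
    PB (fun n => m (φ n)) := by
  obtain ⟨K, hK, D, hD⟩ := h
  refine ⟨K * ((q : ℝ) + 1) ^ D, by positivity, D, fun n => (hD _).trans ?_⟩
  rw [mul_assoc, ← mul_pow]
  have : (φ n : ℝ) ≤ n + q := by exact_mod_cast hφ n
  have : (φ n : ℝ) + 1 ≤ ((q : ℝ) + 1) * (n + 1) := by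
    nlinarith [mul_nonneg (Nat.cast_nonneg (α := ℝ) q) (Nat.cast_nonneg (α := ℝ) n)]
  gcongr

lemma PB.meixner (x : ℕ) (β c : ℝ) : PB (fun n => meixner n x β c) := by
  have : (fun n => _root_.meixner n x β c) = fun n : ℕ => ∑ j ∈ Finset.range (x + 1),
      mg β (1 - 1 / c) j * n.descFactorial j * x.descFactorial j := by
    ext n
    exact meixner_eq_of_lt' n x (x + 1) β c (by omega)
  rw [this]
  apply PB.sum
  intro j _
  refine ((PB.const _).mul ?_).mul (PB.const _)
  refine ⟨1, zero_le_one, j, fun n => ?_⟩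
  rw [abs_of_nonneg (by positivity), one_mul]
  have : (n.descFactorial j : ℝ) ≤ (n : ℝ) ^ j := by exact_mod_cast Nat.descFactorial_le_pow n j
  refine this.trans ?_
  gcongr
  simp

lemma PB.geom {m : ℕ → ℝ} (h : PB m) {c ρ : ℝ} (hc : 0 < c) (hρ : c < ρ) :
    ∃ K, 0 ≤ K ∧ ∀ n, |m n| * c ^ n ≤ K * ρ ^ n := by
  obtain ⟨K, hK, D, hD⟩ := h
  have hρ0 : 0 < ρ := hc.trans hρ
  set θ := c / ρ with hθ
  have hθ0 : 0 < θ := by positivity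
  have hθ1 : θ < 1 := by rw [hθ, div_lt_one hρ0]; exact hρ
  have h1 := tendsto_pow_const_mul_const_pow_of_lt_one D hθ0.le hθ1
  have h2 := (h1.comp (Filter.tendsto_add_atTop_nat 1)).bddAbove_range
  obtain ⟨B, hB⟩ := h2
  have hB' : ∀ n : ℕ, ((n : ℝ) + 1) ^ D * θ ^ (n + 1) ≤ B := by
    intro n
    have := hB (Set.mem_range_self n)
    simpa using this
  have hB0 : 0 ≤ B := le_trans (by positivity) (hB' 0)
  refine ⟨K * (B / θ), by positivity, fun n => ?_⟩
  have hcθ : c ^ n = θ ^ n * ρ ^ n := by rw [hθ, div_pow]; field_simp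
  have h3 : ((n : ℝ) + 1) ^ D * θ ^ n ≤ B / θ := by
    rw [le_div_iff₀ hθ0]
    have := hB' n
    rw [pow_succ] at this
    linarith
  calc |m n| * c ^ n ≤ (K * ((n : ℝ) + 1) ^ D) * c ^ n := by gcongr; exact hD n
    _ = K * (((n : ℝ) + 1) ^ D * θ ^ n) * ρ ^ n := by rw [hcθ]; ring
    _ ≤ K * (B / θ) * ρ ^ n := by gcongr

lemma summable_binom_PB {α c : ℝ} (hα : 0 < α) (hc0 : 0 < c) (hc : c < 1) {m : ℕ → ℝ} (hm : PB m) :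
    Summable (fun r : ℕ => poch α r / (r.factorial : ℝ) * c ^ r * m r) := by
  obtain ⟨ρ, h1, h2⟩ := exists_between hc
  obtain ⟨K, hK, hb⟩ := hm.geom hc0 h1
  have := (hasSum_binom α (hc0.trans h1).le h2).summable.mul_left K
  refine Summable.of_norm_bounded this (fun r => ?_)
  have hp := (poch_pos hα r)
  rw [Real.norm_eq_abs, abs_mul, abs_mul, abs_div, abs_of_pos hp, abs_of_pos (pow_pos hc0 r),
    abs_of_pos (by positivity : (0 : ℝ) < r.factorial)]
  calc poch α r / r.factorial * c ^ r * |m r| = poch α r / r.factorial * (|m r| * c ^ r) := by ring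
    _ ≤ poch α r / r.factorial * (K * ρ ^ r) := by
      exact mul_le_mul_of_nonneg_left (hb r) (by positivity)
    _ = _ := by ring

/-- Moments of Meixner polynomials. -/
lemma hasSum_meixner {β c : ℝ} (hβ : 0 < β) (hc0 : 0 < c) (hc : c < 1) (N x : ℕ) :
    HasSum (fun r : ℕ => poch (β + N) r / (r.factorial : ℝ) * c ^ r * meixner (N + r) x β c)
      ((-1) ^ x * N.descFactorial x / (c ^ x * poch β x) * (1 - c) ^ (-(β + N))) := by
  have hβN : 0 < β + N := by positivity
  induction x with
  | zero =>
    simp only [meixner_zero_right, mul_one]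
    convert hasSum_binom (β + N) hc0.le hc using 1
    simp [poch_zero]
  | succ x ih =>
    have pbx : ∀ x, PB (fun r => meixner (N + r) x β c) := fun x =>
      (PB.meixner x β c).comp (fun r => N + r) N (fun n => by omega)
    set D : ℕ → ℝ := fun r => poch (β + N) r / (r.factorial : ℝ) * c ^ r *
      (r * meixner (N + r) x β c) with hD
    have sD : Summable D := summable_binom_PB hβN hc0 hc (PB.id.mul (pbx x))
    have s1 := summable_binom_PB hβN hc0 hc (pbx (x + 1))
    have hD0 : D 0 = 0 := by simp [hD]
    have hDs : HasSum (fun r => D (r + 1)) (∑' r, D r) := by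
      have := (hasSum_nat_add_iff' 1).2 sD.hasSum
      simpa [hD0] using this
    have tel := (hDs.sub sD.hasSum)
    rw [sub_self] at tel
    have hrel : ∀ r : ℕ, D (r + 1) - D r = poch (β + N) r / (r.factorial : ℝ) * c ^ r *
        (c * (x + β) * meixner (N + r) (x + 1) β c - (x - N) * meixner (N + r) x β c) := by
      intro r
      have r1 := meixner_R1 (N + r) x (c := c) hβ
      have r3 := meixner_R3 (N + r) x (c := c) hβ
      simp only [hD]
      rw [poch_succ, Nat.factorial_succ, pow_succ]
      push_cast at r1 r3 ⊢
      have e1 : c * (x + β) * meixner (N + r) (x + 1) β c =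
        c * ((x + β) * meixner (N + r) (x + 1) β c) := by ring
      rw [e1, r1, ← add_assoc]
      have hr : ((r : ℝ) + 1) ≠ 0 := by positivity
      have hf : ((r.factorial : ℕ) : ℝ) ≠ 0 := by positivity
      have e2 : poch (β + N) r * (β + N + r) / ((r + 1) * r.factorial) * (c ^ r * c) *
          ((r + 1) * meixner (N + r + 1) x β c) = poch (β + N) r / r.factorial * c ^ r * c *
            ((N + r + β) * meixner (N + r + 1) x β c) := by
        field_simp
        ring
      rw [e2, r3]
      field_simp
      ring
    simp only [hrel] at tel
    have h2 := (tel.add (ih.mul_left ((x : ℝ) - N))).mul_left (1 / (c * (x + β)))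
    have hxβ : (x : ℝ) + β ≠ 0 := by positivity
    have hβx : β + (x : ℝ) ≠ 0 := by positivity
    have hval : (-1 : ℝ) ^ (x + 1) * N.descFactorial (x + 1) / (c ^ (x + 1) * poch β (x + 1)) *
        (1 - c) ^ (-(β + (N : ℝ))) = 1 / (c * (x + β)) * (0 + (x - N) *
          ((-1) ^ x * N.descFactorial x / (c ^ x * poch β x) * (1 - c) ^ (-(β + (N : ℝ))))) := by
      rw [poch_succ, df_succ]
      have := (poch_pos hβ x).ne'
      field_simp
      ring
    rw [hval]
    refine HasSum.congr_fun' h2 (fun r => ?_)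
    field_simp
    ring

/-! ### Summability and interchange of sums -/

lemma summable_pr (q y : ℝ) (p : ℤ) {z : ℝ} (hz : |z| < 1) :
    Summable (fun m : ℕ => pr q y m * z ^ m * ig (p + m) / (m.factorial : ℝ)) := by
  obtain ⟨ρ, h1, h2⟩ := exists_between hz
  apply summable_of_ratio_norm_eventually_le (r := ρ) h2
  have t1 : Filter.Tendsto (fun m : ℕ => (q + 1 * (m : ℝ)) / (1 + 1 * m)) Filter.atTop
      (nhds (1 / 1)) := tendsto_add_mul_div_add_mul_atTop_nhds q 1 1 one_ne_zero
  have t2 : Filter.Tendsto (fun m : ℕ => (q + 1 * (m : ℝ)) / ((p : ℝ) + 1 * m)) Filter.atTop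
      (nhds (1 / 1)) := tendsto_add_mul_div_add_mul_atTop_nhds q (p:ℝ) 1 one_ne_zero
  have t3 : Filter.Tendsto (fun m : ℕ => (y + 0 * (m : ℝ)) / (1 + 1 * m)) Filter.atTop
      (nhds (0 / 1)) := tendsto_add_mul_div_add_mul_atTop_nhds y 1 0 one_ne_zero
  have t4 : Filter.Tendsto (fun m : ℕ => ((1 : ℝ) + 0 * (m : ℝ)) / (p + 1 * m)) Filter.atTop
      (nhds (0 / 1)) := tendsto_add_mul_div_add_mul_atTop_nhds 1 (p:ℝ) 0 one_ne_zero
  have t5 := (((t1.mul t2).add (t3.mul t4)).abs.mul_const |z|)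
  simp only [div_one, mul_one, mul_zero, add_zero, abs_one, one_mul, zero_mul] at t5
  filter_upwards [t5.eventually_lt_const h1, Filter.eventually_gt_atTop ((-p).toNat)] with m hm hp
  have hpm : 0 < p + m := by omega
  have hpmR : (0 : ℝ) < p + m := by exact_mod_cast hpm
  have hig : ig (p + (m + 1 : ℕ)) = ig (p + m) / (p + m) := by
    rw [eq_div_iff hpmR.ne', ← ig_succ (p + m)]
    push_cast
    rw [add_assoc]
  rw [pr_succ, hig, Nat.factorial_succ, pow_succ z m]
  have hf : (0 : ℝ) < m.factorial := by positivity
  have hm1 : (0 : ℝ) < 1 + m := by positivity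
  have e : pr q y m * ((q + m) ^ 2 + y) * (z ^ m * z) * (ig (p + m) / (p + m)) /
      (((m + 1) * m.factorial : ℕ) : ℝ) =
      (((q + m) / (1 + m) * ((q + m) / (p + m)) + y / (1 + m) * (1 / (p + m))) * z) *
        (pr q y m * z ^ m * ig (p + m) / (m.factorial : ℝ)) := by
    push_cast
    have : (m : ℝ) + 1 ≠ 0 := by positivity
    field_simp
    ring
  rw [e, norm_mul]
  apply mul_le_mul_of_nonneg_right _ (norm_nonneg _)
  rw [Real.norm_eq_abs, abs_mul]
  exact hm.le

/-- The coefficients of the expansions. -/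
noncomputable def co (q y : ℝ) (p : ℤ) (j : ℕ) : ℝ :=
  (-1) ^ j * pr q y j * ig (p + j) / (j.factorial : ℝ)

lemma summable_co (q y : ℝ) (p : ℤ) {z : ℝ} (hz0 : 0 ≤ z) (hz : z < 1) :
    Summable (fun j => |co q y p j| * z ^ j) := by
  have := (summable_pr q y p (z := -z) (by rwa [abs_neg, abs_of_nonneg hz0])).abs
  refine this.congr (fun j => ?_)
  rw [← abs_of_nonneg (pow_nonneg hz0 j), ← abs_mul, co, neg_pow]
  congr 1
  ring

section fubini

variable {a : ℕ → ℝ} {α c : ℝ} {m : ℕ → ℝ}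

lemma summable_double (hpos : ∀ j, a j ≠ 0 → 0 < α + j)
    (ha : ∀ z : ℝ, 0 ≤ z → z < 1 → Summable (fun j => |a j| * z ^ j)) (hm : PB m)
    (hc0 : 0 < c) (hc : c < 1 / 2) :
    Summable (fun q : ℕ × ℕ => a q.1 * (poch (α + q.1) q.2 / (q.2.factorial : ℝ)) *
      (c ^ (q.1 + q.2) * m (q.1 + q.2))) := by
  obtain ⟨ρ, h1, h2⟩ := exists_between hc
  obtain ⟨K, hK, hb⟩ := hm.geom hc0 h1
  have hρ0 : 0 < ρ := hc0.trans h1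
  have hρ1 : 0 < 1 - ρ := by linarith
  have hsum : ∀ j, HasSum (fun r : ℕ => K * (|a j| * ρ ^ j) *
      (|poch (α + j) r| / (r.factorial : ℝ) * ρ ^ r))
      (K * (1 - ρ) ^ (-α) * (|a j| * (ρ / (1 - ρ)) ^ j)) := by
    intro j
    by_cases hj : a j = 0
    · simp only [hj, abs_zero, zero_mul, mul_zero]
      exact hasSum_zero
    · have hp := hpos j hj
      have hb := (hasSum_binom (α + j) hρ0.le (by linarith)).mul_left (K * (|a j| * ρ ^ j))
      have : K * (1 - ρ) ^ (-α) * (|a j| * (ρ / (1 - ρ)) ^ j) =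
          K * (|a j| * ρ ^ j) * (1 - ρ) ^ (-(α + j)) := by
        rw [neg_add, Real.rpow_add hρ1, Real.rpow_neg hρ1.le (j : ℝ), Real.rpow_natCast, div_pow]
        field_simp
      rw [this]
      refine HasSum.congr_fun' hb (fun r => ?_)
      rw [abs_of_pos (poch_pos hp r)]
  have hS : Summable (fun q : ℕ × ℕ => K * (|a q.1| * ρ ^ q.1) *
      (|poch (α + q.1) q.2| / (q.2.factorial : ℝ) * ρ ^ q.2)) := by
    rw [summable_prod_of_nonneg]
    · refine ⟨fun j => (hsum j).summable, ?_⟩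
      have : (fun j : ℕ => ∑' r : ℕ, K * (|a j| * ρ ^ j) *
        (|poch (α + j) r| / (r.factorial : ℝ) * ρ ^ r)) =
          fun j => K * (1 - ρ) ^ (-α) * (|a j| * (ρ / (1 - ρ)) ^ j) :=
        funext fun j => (hsum j).tsum_eq
      simp only [this]
      exact (ha _ (by positivity) (by rw [div_lt_one hρ1]; linarith)).mul_left _
    · intro q
      simp only [Pi.zero_apply]
      positivity
  refine Summable.of_norm_bounded hS (fun q => ?_)
  rw [Real.norm_eq_abs, abs_mul, abs_mul, abs_div, abs_mul, abs_of_pos (pow_pos hc0 _),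
    abs_of_pos (by positivity : (0 : ℝ) < q.2.factorial)]
  calc |a q.1| * (|poch (α + q.1) q.2| / q.2.factorial) * (c ^ (q.1 + q.2) * |m (q.1 + q.2)|)
      = |a q.1| * (|poch (α + q.1) q.2| / q.2.factorial) * (|m (q.1 + q.2)| * c ^ (q.1 + q.2)) := by
        ring
    _ ≤ |a q.1| * (|poch (α + q.1) q.2| / q.2.factorial) * (K * ρ ^ (q.1 + q.2)) :=
        mul_le_mul_of_nonneg_left (hb _) (by positivity)
    _ = _ := by rw [pow_add]; ring

/-- convolution -/
noncomputable def Wn (a : ℕ → ℝ) (α : ℝ) (n : ℕ) : ℝ :=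
  ∑ j ∈ Finset.range (n + 1), a j * (poch (α + j) (n - j) / ((n - j).factorial : ℝ))

lemma hasSum_W (hpos : ∀ j, a j ≠ 0 → 0 < α + j)
    (ha : ∀ z : ℝ, 0 ≤ z → z < 1 → Summable (fun j => |a j| * z ^ j)) (hm : PB m)
    (hc0 : 0 < c) (hc : c < 1 / 2) {T : ℕ → ℝ}
    (hT : ∀ j, a j ≠ 0 → HasSum (fun r : ℕ => poch (α + j) r / (r.factorial : ℝ) * c ^ r *
      m (j + r)) (T j)) :
    Summable (fun n => Wn a α n * c ^ n * m n) ∧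
    ∑' n, Wn a α n * c ^ n * m n = ∑' j, a j * c ^ j * T j := by
  have hS := summable_double hpos ha hm hc0 hc
  have h1 := (Finset.HasAntidiagonal.sigmaAntidiagonalEquivProd (A := ℕ)).hasSum_iff.2 hS.hasSum
  have h2 := h1.sigma (fun n => hasSum_fintype _)
  have h3 : HasSum (fun n => Wn a α n * c ^ n * m n) (∑' q : ℕ × ℕ, a q.1 *
      (poch (α + q.1) q.2 / (q.2.factorial : ℝ)) * (c ^ (q.1 + q.2) * m (q.1 + q.2))) := by
    refine HasSum.congr_fun' h2 (fun n => ?_)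
    simp only [Function.comp, Finset.HasAntidiagonal.sigmaAntidiagonalEquivProd_apply]
    rw [Finset.sum_coe_sort (Finset.HasAntidiagonal.antidiagonal n) (fun q : ℕ × ℕ => a q.1 *
      (poch (α + q.1) q.2 / (q.2.factorial : ℝ)) * (c ^ (q.1 + q.2) * m (q.1 + q.2)))]
    rw [Finset.Nat.sum_antidiagonal_eq_sum_range_succ_mk, Wn, mul_assoc, Finset.sum_mul]
    apply Finset.sum_congr rfl
    intro j hj
    rw [Finset.mem_range] at hj
    rw [show j + (n - j) = n by omega]
  refine ⟨h3.summable, ?_⟩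
  rw [h3.tsum_eq]
  refine (HasSum.prod_fiberwise hS.hasSum (fun j => ?_)).tsum_eq.symm
  by_cases hj : a j = 0
  · simp only [hj, zero_mul]
    exact hasSum_zero
  · refine HasSum.congr_fun' ((hT j hj).mul_left (a j * c ^ j)) (fun r => ?_)
    simp only
    rw [pow_add]
    ring

lemma summable_W (hpos : ∀ j, a j ≠ 0 → 0 < α + j)
    (ha : ∀ z : ℝ, 0 ≤ z → z < 1 → Summable (fun j => |a j| * z ^ j)) (hm : PB m)
    (hc0 : 0 < c) (hc : c < 1 / 2) :
    Summable (fun n => Wn a α n * c ^ n * m n) := by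
  refine (hasSum_W (T := fun j => ∑' r : ℕ, poch (α + j) r / (r.factorial : ℝ) * c ^ r *
      m (j + r)) hpos ha hm hc0 hc (fun j hj => ?_)).1
  exact (summable_binom_PB (hpos j hj) hc0 (by linarith)
    (hm.comp (fun r => j + r) j (fun n => by omega))).hasSum

end fubini

/-- `S_n / (n! Γ(n+p))` -/
noncomputable def En (y a b d : ℝ) (p : ℤ) (n : ℕ) : ℝ :=
  cdHahn n y a b d * ig (p + n) / (n.factorial : ℝ)

lemma En_eq {y a b d : ℝ} {p : ℤ} (h : a + d = p) (n : ℕ) :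
    En y a b d p n = Wn (co a y p) (a + b) n := by
  unfold En Wn
  rw [cdHahn_eq, h, Finset.sum_mul, Finset.sum_div]
  apply Finset.sum_congr rfl
  intro j hj
  rw [Finset.mem_range] at hj
  obtain ⟨r, rfl⟩ : ∃ r, n = j + r := ⟨n - j, by omega⟩
  rw [sc_add, Nat.add_sub_cancel_left, co]
  have h1 := ig_poch (p + j) r
  push_cast at h1 ⊢
  rw [← h1, add_assoc (p : ℤ)]
  have h2 : (((j + r).factorial : ℕ) : ℝ) ≠ 0 := by positivity
  field_simp

lemma En_eq' {y a b d : ℝ} {p : ℤ} (h : a + d = p) (n : ℕ) :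
    En y a b d p n = Wn (co d y p) (d + b) n := by
  rw [← En_eq (a := d) (d := a) (by linarith), En, En, cdHahn_symm]

lemma co_ne {q y : ℝ} {p : ℤ} {j : ℕ} (h : co q y p j ≠ 0) : 0 < p + j := by
  by_contra h'
  exact h (by rw [co, ig_nonpos (by omega)]; simp)

lemma summable_En {y a b d c : ℝ} {p : ℤ} (h : a + d = p) (hab : 0 < a + b) {m : ℕ → ℝ}
    (hm : PB m) (hc0 : 0 < c) (hc : c < 1 / 2) :
    Summable (fun n => En y a b d p n * c ^ n * m n) := by
  simp only [En_eq h]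
  exact summable_W (fun j _ => by positivity) (fun z h0 h1 => summable_co _ _ _ h0 h1) hm hc0 hc

/-- The regularized Gauss series. -/
noncomputable def Ph (q y : ℝ) (p : ℤ) (c : ℝ) : ℝ :=
  ∑' m : ℕ, pr q y m * (c / (c - 1)) ^ m * ig (p + m) / (m.factorial : ℝ)

lemma co_mul (q y : ℝ) (p : ℤ) (α : ℝ) {c : ℝ} (hc : c < 1) (j : ℕ) :
    co q y p j * c ^ j * (1 - c) ^ (-(α + j)) =
      (1 - c) ^ (-α) * (pr q y j * (c / (c - 1)) ^ j * ig (p + j) / (j.factorial : ℝ)) := by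
  have h1 : 0 < 1 - c := by linarith
  rw [neg_add, Real.rpow_add h1, Real.rpow_neg h1.le (j : ℝ), Real.rpow_natCast, co]
  have : c / (c - 1) = (-1) * (c / (1 - c)) := by
    rw [← neg_sub 1 c, div_neg]; ring
  rw [this, mul_pow, div_pow]
  ring

/-- Euler's transformation. -/
lemma euler {a d y c : ℝ} {p : ℤ} (h : a + d = p) (hc0 : 0 < c) (hc : c < 1 / 2) :
    (1 - c) ^ (d - a) * Ph a y p c = Ph d y p c := by
  have h1 : 0 < 1 - c := by linarith
  set b := |a| + |d| + 1
  have ha : 0 < a + b := by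
    have := neg_abs_le a
    have := abs_nonneg d
    simp only [b]; linarith
  have hd : 0 < d + b := by
    have := neg_abs_le d
    have := abs_nonneg a
    simp only [b]; linarith
  have k1 := (hasSum_W (a := co a y p) (α := a + b) (m := fun _ => 1) (fun j _ => by positivity)
    (fun z h0 h1 => summable_co _ _ _ h0 h1) (PB.const 1) hc0 hc
    (T := fun j => (1 - c) ^ (-((a + b) + j)))
    (fun j _ => by simpa only [mul_one] using hasSum_binom (a + b + j) hc0.le (show c < 1 by linarith))).2
  have k2 := (hasSum_W (a := co d y p) (α := d + b) (m := fun _ => 1) (fun j _ => by positivity)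
    (fun z h0 h1 => summable_co _ _ _ h0 h1) (PB.const 1) hc0 hc
    (T := fun j => (1 - c) ^ (-((d + b) + j)))
    (fun j _ => by simpa only [mul_one] using hasSum_binom (d + b + j) hc0.le (show c < 1 by linarith))).2
  simp only [← En_eq (b := b) h] at k1
  simp only [← En_eq' (b := b) h] at k2
  rw [k1] at k2
  simp only [co_mul _ _ _ _ (show c < 1 by linarith), tsum_mul_left] at k2
  change (1 - c) ^ (-(a + b)) * Ph a y p c = (1 - c) ^ (-(d + b)) * Ph d y p c at k2
  rw [show d - a = (d + b) + (-(a + b)) by ring, Real.rpow_add h1, mul_assoc, k2, ← mul_assoc,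
    ← Real.rpow_add h1]
  simp

lemma df_ig (N x : ℕ) : (N.descFactorial x : ℝ) * ig (N + 1) = ig (N + 1 - x) := by
  induction x with
  | zero => simp
  | succ x ih =>
    rw [df_succ, mul_assoc, ih]
    have := ig_succ (N - x)
    push_cast at this ⊢
    rw [show (N : ℤ) + 1 - (x + 1) = N - x by ring, ← this,
      show (N : ℤ) - x + 1 = N + 1 - x by ring]
    ring

/-- base case `x₁ = 0` -/
lemma base_one {a b d y c : ℝ} {p : ℤ} (h : a + d = p) (hab : 0 < a + b)
    (hc0 : 0 < c) (hc : c < 1 / 2) (x : ℕ) :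
    (-1) ^ x * (1 - c) ^ (b + d) * poch (a + b) x *
      ∑' n, En y a b d p n * c ^ n * meixner n x (a + b) c =
    (-1) ^ x * pr a y x * Ph d y (p + x) c := by
  have h1 : 0 < 1 - c := by linarith
  have k1 := (hasSum_W (a := co a y p) (α := a + b) (fun j _ => by positivity)
    (fun z h0 h1 => summable_co _ _ _ h0 h1) (PB.meixner x (a + b) c) hc0 hc
    (fun j _ => hasSum_meixner hab hc0 (by linarith) j x)).2
  simp only [← En_eq h] at k1
  rw [k1]
  have e1 : ∀ j : ℕ, co a y p j * c ^ j * ((-1) ^ x * j.descFactorial x /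
      (c ^ x * poch (a + b) x) * (1 - c) ^ (-(a + b + j))) =
      ((-1) ^ x / (c ^ x * poch (a + b) x) * (1 - c) ^ (-(a + b))) *
      (pr a y j * (c / (c - 1)) ^ j * ig (p + j) / (j.factorial : ℝ) * j.descFactorial x) := by
    intro j
    have := co_mul a y p (a + b) (show c < 1 by linarith) j
    linear_combination ((-1) ^ x * j.descFactorial x / (c ^ x * poch (a + b) x)) * this
  simp only [e1, tsum_mul_left]
  have e2 : ∑' j : ℕ, (pr a y j * (c / (c - 1)) ^ j * ig (p + j) / (j.factorial : ℝ) *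
      j.descFactorial x) = pr a y x * (c / (c - 1)) ^ x * Ph (a + x) y (p + x) c := by
    rw [Ph, ← tsum_mul_left]
    have hinj : Function.Injective (fun m : ℕ => x + m) := fun _ _ h => by simpa using h
    rw [← hinj.tsum_eq]
    · apply tsum_congr
      intro m
      rw [pr_add, pow_add]
      have : ((x + m).descFactorial x : ℝ) = ((x + m).factorial : ℝ) / m.factorial := by
        rw [eq_div_iff (by positivity)]
        have := Nat.factorial_mul_descFactorial (n := x + m) (k := x) (by omega)
        rw [Nat.add_sub_cancel_left, mul_comm] at this
        exact_mod_cast this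
      rw [this]
      push_cast
      rw [← add_assoc]
      field_simp
    · intro j hj
      simp only [Set.mem_range]
      by_contra hne
      apply hj
      have : j < x := by
        by_contra hlt
        exact hne ⟨j - x, by omega⟩
      simp [Nat.descFactorial_eq_zero_iff_lt.2 this]
  rw [e2]
  have eu := euler (a := a + x) (d := d) (y := y) (c := c) (p := p + x)
    (by push_cast; linarith) hc0 hc
  rw [← eu]
  have hp := (poch_pos hab x).ne'
  have e3 : c / (c - 1) = (-1) * (c / (1 - c)) := by
    rw [← neg_sub 1 c, div_neg]; ring
  have e4 : (1 - c) ^ (d - (a + x)) = (1 - c) ^ (b + d) * (1 - c) ^ (-(a + b)) / (1 - c) ^ x := by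
    rw [← Real.rpow_add h1, ← Real.rpow_natCast (1 - c) x, ← Real.rpow_sub h1]
    congr 1
    ring
  rw [e3, e4, mul_pow, div_pow]
  have : ((-1 : ℝ) ^ x) * (-1) ^ x = 1 := by rw [← mul_pow]; simp
  field_simp
  linear_combination (pr a y x * Ph (a + x) y (p + x) c) * this

/-- base case `x₂ = 0` -/
lemma base_two {a b d y c β : ℝ} {p : ℤ} (h : a + d = p) (hβ : 0 < β) (hbd : d + b = β + (p - 1))
    (hc0 : 0 < c) (hc : c < 1 / 2) (x : ℕ) :
    (-1) ^ x * c ^ x * (1 - c) ^ (b + d) * poch β x *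
      ∑' n, En y a b d p n * c ^ n * meixner (n + (p - 1)).toNat x β c =
    Ph d y (p - x) c := by
  have h1 : 0 < 1 - c := by linarith
  have hN : ∀ j, co d y p j ≠ 0 → (((j + (p - 1)).toNat : ℕ) : ℝ) = j + (p - 1) := by
    intro j hj
    have h0 : 0 ≤ (j : ℤ) + (p - 1) := by have := co_ne hj; omega
    have := Int.toNat_of_nonneg h0
    exact_mod_cast this
  have hpos : ∀ j, co d y p j ≠ 0 → 0 < d + b + j := by
    intro j hj
    have := hN j hj
    have h2 : (0 : ℝ) ≤ (((j + (p - 1)).toNat : ℕ) : ℝ) := by positivity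
    linarith
  have k1 := (hasSum_W (a := co d y p) (α := d + b) hpos
    (fun z h0 h1 => summable_co _ _ _ h0 h1)
    (m := fun n => meixner (n + (p - 1)).toNat x β c)
    ((PB.meixner x β c).comp _ (p - 1).toNat (fun n => by omega)) hc0 hc
    (T := fun j => (-1) ^ x * (j + (p - 1)).toNat.descFactorial x / (c ^ x * poch β x) *
      (1 - c) ^ (-(d + b + j)))
    (fun j hj => by
      have h0 : 0 ≤ (j : ℤ) + (p - 1) := by have := co_ne hj; omega
      have e : d + b + j = β + (((j + (p - 1)).toNat : ℕ) : ℝ) := by rw [hN j hj, hbd]; ring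
      rw [e]
      refine HasSum.congr_fun' (hasSum_meixner hβ hc0 (by linarith) (j + (p - 1)).toNat x)
        (fun r => ?_)
      congr 2
      push_cast
      omega)).2
  simp only [← En_eq' h] at k1
  rw [k1]
  have e1 : ∀ j : ℕ, co d y p j * c ^ j * ((-1) ^ x * (j + (p - 1)).toNat.descFactorial x /
      (c ^ x * poch β x) * (1 - c) ^ (-(d + b + j))) =
      ((-1) ^ x / (c ^ x * poch β x) * (1 - c) ^ (-(d + b))) *
      (pr d y j * (c / (c - 1)) ^ j * ig (p - x + j) / (j.factorial : ℝ)) := by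
    intro j
    have e := co_mul d y p (d + b) (show c < 1 by linarith) j
    have e' : ((j + (p - 1)).toNat.descFactorial x : ℝ) * ig (p + j) = ig (p - x + j) := by
      rcases le_or_gt (p + j) 0 with h' | h'
      · rw [ig_nonpos h', ig_nonpos (by omega)]; simp
      · have := df_ig (j + (p - 1)).toNat x
        rw [Int.toNat_of_nonneg (by omega)] at this
        rw [show (p : ℤ) + j = j + (p - 1) + 1 by ring, this]
        congr 1
        ring
    rw [← e']
    linear_combination ((-1) ^ x * (j + (p - 1)).toNat.descFactorial x / (c ^ x * poch β x)) * e
  simp only [e1, tsum_mul_left]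
  rw [show ∑' j : ℕ, pr d y j * (c / (c - 1)) ^ j * ig (p - x + j) / (j.factorial : ℝ) =
    Ph d y (p - x) c from rfl, Real.rpow_neg h1.le, add_comm d b]
  have hp := (poch_pos hβ x).ne'
  have hq : (1 - c) ^ (b + d) ≠ 0 := (Real.rpow_pos_of_pos h1 _).ne'
  have : ((-1 : ℝ) ^ x) * (-1) ^ x = 1 := by rw [← mul_pow]; simp
  field_simp
  linear_combination (Ph d y (p - x) c) * this

/-! ### The recurrence along the diagonal -/

lemma En_rec (y a b : ℝ) (p : ℤ) (n : ℕ) :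
    En y a b (1 - a + p) (p + 1) (n + 2) * (n + 2) * (n + 2 + p) =
      (2 * (n + 1) * (n + 1 + p) + (n + 1) * (b + 1 - a) + (n + 1 + p) * (a + b) +
        (a * b + (a + b) * (1 - a)) - y) * En y a b (1 - a + p) (p + 1) (n + 1)
      - (n + (a + b)) * (n + (b + 1 - a) + p) * En y a b (1 - a + p) (p + 1) n := by
  have h := cdHahn_rec (n + 1) y a b (1 - a + p)
  have g1 := ig_succ (p + 1 + (n + 1))
  have g2 := ig_succ (p + 1 + n)
  simp only [En]
  rw [Nat.add_sub_cancel] at h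
  rw [show n + 2 = n + 1 + 1 by ring, h, Nat.factorial_succ (n + 1), Nat.factorial_succ n]
  push_cast at g1 g2 ⊢
  rw [show p + 1 + ((n : ℤ) + 1 + 1) = p + 1 + (n + 1) + 1 by ring,
    ← g2, show p + 1 + (n : ℤ) + 1 = p + 1 + (n + 1) by ring, ← g1]
  have h1 : (n.factorial : ℝ) ≠ 0 := by positivity
  have h2 : (n : ℝ) + 1 ≠ 0 := by positivity
  have h3 : (n : ℝ) + 1 + 1 ≠ 0 := by positivity
  field_simp
  ring

lemma En_rec_zero (y a b : ℝ) (p : ℤ) :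
    En y a b (1 - a + p) (p + 1) 1 * (1 + p) =
      (p * (a + b) + (a * b + (a + b) * (1 - a)) - y) * En y a b (1 - a + p) (p + 1) 0 := by
  have h := cdHahn_rec 0 y a b (1 - a + p)
  have g1 := ig_succ (p + 1)
  simp only [En]
  rw [zero_add] at h
  rw [h]
  push_cast at g1 ⊢
  rw [add_zero, ← g1]
  simp
  ring

lemma En_zero (y a b d : ℝ) (p : ℤ) (n : ℕ) (h : p + n ≤ 0) : En y a b d p n = 0 := by
  simp [En, ig_nonpos h]

/-- The bilinear sum. -/
noncomputable def Rt (y a b c : ℝ) (p : ℤ) (x₁ x₂ : ℕ) : ℝ :=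
  ∑' n : ℕ, En y a b (1 - a + p) (p + 1) n * c ^ n *
    (meixner ((n : ℤ) + p).toNat x₁ (b + 1 - a) c * meixner n x₂ (a + b) c)

lemma PB_prod (p : ℤ) (x₁ x₂ : ℕ) (β₁ β₂ c : ℝ) :
    PB (fun n : ℕ => meixner ((n : ℤ) + p).toNat x₁ β₁ c * meixner n x₂ β₂ c) :=
  ((PB.meixner x₁ β₁ c).comp (fun n : ℕ => ((n : ℤ) + p).toNat) p.toNat
    (fun n => by omega)).mul (PB.meixner x₂ β₂ c)

lemma Rt_summable {a b c : ℝ} (y : ℝ) (hab : 0 < a + b) (hc0 : 0 < c) (hc : c < 1 / 2)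
    (p : ℤ) (x₁ x₂ : ℕ) :
    Summable (fun n : ℕ => En y a b (1 - a + p) (p + 1) n * c ^ n *
      (meixner ((n : ℤ) + p).toNat x₁ (b + 1 - a) c * meixner n x₂ (a + b) c)) :=
  summable_En (by push_cast; ring) hab (PB_prod p x₁ x₂ _ _ c) hc0 hc

lemma term_id {a b c : ℝ} (y : ℝ) (h₁ : 0 < b + 1 - a) (h₂ : 0 < a + b) (hc0 : 0 < c)
    (p : ℤ) (x₁ x₂ : ℕ) (E : ℕ → ℝ) (hE : E = En y a b (1 - a + p) (p + 1))
    (X Y Yt : ℕ → ℝ)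
    (hX : ∀ n : ℕ, X n = E n * c ^ n * ((n * (n + p) / c) *
      (meixner (((n : ℤ) + p).toNat - 1) x₁ (b + 1 - a) c * meixner (n - 1) x₂ (a + b) c)))
    (hY : ∀ n : ℕ, Y n = E n * c ^ n * ((c * (n + (a + b)) * (n + (b + 1 - a) + p)) *
      (meixner (((n : ℤ) + p).toNat + 1) x₁ (b + 1 - a) c * meixner (n + 1) x₂ (a + b) c)))
    (hYt : ∀ n : ℕ, Yt n = if n = 0 then 0 else Y (n - 1)) (n : ℕ) :
    (X (n + 1) - X n) + (Yt n - Y n) =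
    (-c * (x₁ + (b + 1 - a)) * (x₂ + (a + b))) * (E n * c ^ n *
      (meixner ((n : ℤ) + p).toNat (x₁ + 1) (b + 1 - a) c * meixner n (x₂ + 1) (a + b) c)) +
    (2 * x₁ * x₂ + x₂ * (b + 1 - a) + x₁ * (a + b) + (a * b + (a + b) * (1 - a)) - y) *
      (E n * c ^ n *
      (meixner ((n : ℤ) + p).toNat x₁ (b + 1 - a) c * meixner n x₂ (a + b) c)) -
    (x₁ * x₂ / c) * (E n * c ^ n *
      (meixner ((n : ℤ) + p).toNat (x₁ - 1) (b + 1 - a) c * meixner n (x₂ - 1) (a + b) c)) := by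
  have E0 : ∀ m : ℕ, (m : ℤ) + p < 0 → E m = 0 := fun m hm => by
    rw [hE]; exact En_zero _ _ _ _ _ _ (by omega)
  rcases lt_or_ge ((n : ℤ) + p) 0 with hn | hn
  · have e1 : X n = 0 := by rw [hX, E0 n hn]; simp
    have e2 : Y n = 0 := by rw [hY, E0 n hn]; simp
    have e3 : Yt n = 0 := by
      rw [hYt]
      split_ifs with h
      · rfl
      · rw [hY, E0 (n - 1) (by omega)]; simp
    have e4 : X (n + 1) = 0 := by
      rcases eq_or_ne ((n : ℤ) + 1 + p) 0 with h | h
      · have h' : (n : ℝ) + 1 + p = 0 := by exact_mod_cast h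
        rw [hX]; push_cast; rw [h']; simp
      · rw [hX, E0 (n + 1) (by push_cast; omega)]; simp
    rw [e1, e2, e3, e4, E0 n hn]; simp
  · obtain ⟨N, hN⟩ : ∃ N : ℕ, (n : ℤ) + p = N := ⟨((n : ℤ) + p).toNat, by omega⟩
    have hNR : (n : ℝ) + p = N := by exact_mod_cast hN
    have hp : (p : ℝ) = N - n := by linarith
    have br := meixner_bracket n N x₁ x₂ h₁ h₂ hc0
    have eX1 : X (n + 1) = E (n + 1) * (n + 1) * (n + 1 + p) * c ^ n *
        (meixner N x₁ (b + 1 - a) c * meixner n x₂ (a + b) c) := by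
      rw [hX, show ((n + 1 : ℕ) : ℤ) + p = (N + 1 : ℕ) by push_cast; omega]
      simp only [Int.toNat_natCast, Nat.add_sub_cancel]
      push_cast
      rw [pow_succ]
      field_simp
    have eX : X n = E n * c ^ n * ((n * N / c) *
      (meixner (N - 1) x₁ (b + 1 - a) c * meixner (n - 1) x₂ (a + b) c)) := by
      rw [hX, hN, hNR]; simp only [Int.toNat_natCast]
    have eY : Y n = E n * c ^ n * ((c * (n + (a + b)) * (N + (b + 1 - a))) *
      (meixner (N + 1) x₁ (b + 1 - a) c * meixner (n + 1) x₂ (a + b) c)) := by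
      rw [hY, hN, hp]; simp only [Int.toNat_natCast]
      ring
    have main : X (n + 1) + Yt n = (2 * n * N + n * (b + 1 - a) + N * (a + b) +
        (a * b + (a + b) * (1 - a)) - y) * (E n * c ^ n) *
        (meixner N x₁ (b + 1 - a) c * meixner n x₂ (a + b) c) := by
      rw [eX1, hYt]
      cases n with
      | zero =>
        have r := En_rec_zero y a b p
        rw [← hE] at r
        simp only [if_true, add_zero, zero_add, Nat.cast_zero, pow_zero, mul_one, mul_zero,
          zero_mul] at r ⊢
        have hp' : (N : ℝ) = p := by rw [hp]; simp
        rw [hp']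
        linear_combination (meixner N x₁ (b + 1 - a) c * meixner 0 x₂ (a + b) c) * r
      | succ m =>
        have r := En_rec y a b p m
        rw [← hE] at r
        rw [if_neg (by omega), Nat.add_sub_cancel, hY]
        have hz : E m * meixner (((m : ℤ) + p).toNat + 1) x₁ (b + 1 - a) c =
            E m * meixner N x₁ (b + 1 - a) c := by
          rcases lt_or_ge ((m : ℤ) + p) 0 with h | h
          · rw [E0 m h]; simp
          · rw [show ((m : ℤ) + p).toNat + 1 = N by push_cast at hN; omega]
        push_cast at hNR ⊢
        rw [← hNR]
        rw [pow_succ]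
        linear_combination (c ^ m * c * (meixner N x₁ (b + 1 - a) c *
          meixner (m + 1) x₂ (a + b) c)) * r + c ^ m * ((c * (m + (a + b)) *
          (m + (b + 1 - a) + p)) * meixner (m + 1) x₂ (a + b) c) * hz
    rw [hN, Int.toNat_natCast]
    linear_combination main - eX - eY + E n * c ^ n * br

lemma Rt_rec {a b c : ℝ} (y : ℝ) (h₁ : 0 < b + 1 - a) (h₂ : 0 < a + b) (hc0 : 0 < c)
    (hc : c < 1 / 2) (p : ℤ) (x₁ x₂ : ℕ) :
    (-c * (x₁ + (b + 1 - a)) * (x₂ + (a + b))) * Rt y a b c p (x₁ + 1) (x₂ + 1) +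
    (2 * x₁ * x₂ + x₂ * (b + 1 - a) + x₁ * (a + b) + (a * b + (a + b) * (1 - a)) - y) *
      Rt y a b c p x₁ x₂ -
    (x₁ * x₂ / c) * Rt y a b c p (x₁ - 1) (x₂ - 1) = 0 := by
  set E := En y a b (1 - a + p) (p + 1) with hE
  set X : ℕ → ℝ := fun n : ℕ => E n * c ^ n * ((n * (n + p) / c) *
      (meixner (((n : ℤ) + p).toNat - 1) x₁ (b + 1 - a) c * meixner (n - 1) x₂ (a + b) c)) with hX
  set Y : ℕ → ℝ := fun n : ℕ => E n * c ^ n * ((c * (n + (a + b)) * (n + (b + 1 - a) + p)) *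
      (meixner (((n : ℤ) + p).toNat + 1) x₁ (b + 1 - a) c * meixner (n + 1) x₂ (a + b) c)) with hY
  set Yt : ℕ → ℝ := fun n : ℕ => if n = 0 then 0 else Y (n - 1) with hYt
  have sX : Summable X := by
    refine summable_En (by push_cast; ring) h₂ (m := fun n : ℕ => (n * (n + p) / c) *
      (meixner (((n : ℤ) + p).toNat - 1) x₁ (b + 1 - a) c * meixner (n - 1) x₂ (a + b) c))
      ?_ hc0 hc
    refine PB.mul ?_ (PB.mul ?_ ?_)
    · exact (PB.id.mul (PB.id.add (PB.const p))).mul (PB.const c⁻¹)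
    · exact (PB.meixner x₁ (b + 1 - a) c).comp (fun n : ℕ => ((n : ℤ) + p).toNat - 1) p.toNat
        (fun n => by omega)
    · exact (PB.meixner x₂ (a + b) c).comp (fun n : ℕ => n - 1) 0 (fun n => by omega)
  have sY : Summable Y := by
    refine summable_En (by push_cast; ring) h₂ (m := fun n : ℕ =>
      (c * (n + (a + b)) * (n + (b + 1 - a) + p)) *
      (meixner (((n : ℤ) + p).toNat + 1) x₁ (b + 1 - a) c * meixner (n + 1) x₂ (a + b) c))
      ?_ hc0 hc
    refine PB.mul ?_ (PB.mul ?_ ?_)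
    · exact ((PB.const c).mul (PB.id.add (PB.const _))).mul
        ((PB.id.add (PB.const _)).add (PB.const p))
    · exact (PB.meixner x₁ (b + 1 - a) c).comp (fun n : ℕ => ((n : ℤ) + p).toNat + 1)
        (p.toNat + 1) (fun n => by omega)
    · exact (PB.meixner x₂ (a + b) c).comp (fun n : ℕ => n + 1) 1 (fun n => by omega)
  have X0 : X 0 = 0 := by simp [hX]
  have k1 : HasSum (fun n => X (n + 1)) (∑' n, X n) := by
    have := (hasSum_nat_add_iff' (f := X) 1).2 sX.hasSum
    simpa [X0] using this
  have k2 : HasSum Yt (∑' n, Y n) := by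
    have : HasSum (fun n => Yt (n + 1)) (∑' n, Y n) := by simpa [hYt] using sY.hasSum
    have := (hasSum_nat_add_iff (f := Yt) 1).1 this
    simpa [hYt] using this
  have k3 := (k1.sub sX.hasSum).add (k2.sub sY.hasSum)
  have k4 := (((Rt_summable y h₂ hc0 hc p (x₁ + 1) (x₂ + 1)).hasSum.mul_left
    (-c * (x₁ + (b + 1 - a)) * (x₂ + (a + b)))).add
    ((Rt_summable y h₂ hc0 hc p x₁ x₂).hasSum.mul_left
    (2 * x₁ * x₂ + x₂ * (b + 1 - a) + x₁ * (a + b) + (a * b + (a + b) * (1 - a)) - y))).sub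
    ((Rt_summable y h₂ hc0 hc p (x₁ - 1) (x₂ - 1)).hasSum.mul_left (x₁ * x₂ / c))
  have k5 := HasSum.congr_fun' k4 (fun n => term_id y h₁ h₂ hc0 p x₁ x₂ E hE X Y Yt
    (fun _ => rfl) (fun _ => rfl) (fun _ => rfl) n)
  have := k5.unique k3
  simp only [sub_self, add_zero] at this
  exact this

/-- The normalised bilinear sum. -/
noncomputable def Rn (y a b c : ℝ) (p : ℤ) (x₁ x₂ : ℕ) : ℝ :=
  (-1) ^ (x₁ + x₂) * c ^ x₁ * (1 - c) ^ (b + 1 - a + (p : ℝ)) * poch (b + 1 - a) x₁ *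
    poch (a + b) x₂ * Rt y a b c p x₁ x₂

lemma Rn_rec {a b c : ℝ} (y : ℝ) (h₁ : 0 < b + 1 - a) (h₂ : 0 < a + b) (hc0 : 0 < c)
    (hc : c < 1 / 2) (p : ℤ) (x₁ x₂ : ℕ) :
    Rn y a b c p (x₁ + 1) (x₂ + 1) =
    (2 * x₁ * x₂ + x₂ * (b + 1 - a) + x₁ * (a + b) + (a * b + (a + b) * (1 - a)) - y) *
      Rn y a b c p x₁ x₂ -
    x₁ * x₂ * (x₁ - 1 + (b + 1 - a)) * (x₂ - 1 + (a + b)) * Rn y a b c p (x₁ - 1) (x₂ - 1) := by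
  have r := Rt_rec y h₁ h₂ hc0 hc p x₁ x₂
  have e1 : Rn y a b c p (x₁ + 1) (x₂ + 1) = (-1) ^ (x₁ + x₂) * c ^ x₁ *
      (1 - c) ^ (b + 1 - a + (p : ℝ)) * poch (b + 1 - a) x₁ * poch (a + b) x₂ *
      (c * (x₁ + (b + 1 - a)) * (x₂ + (a + b)) * Rt y a b c p (x₁ + 1) (x₂ + 1)) := by
    rw [Rn, poch_succ, poch_succ, show x₁ + 1 + (x₂ + 1) = x₁ + x₂ + 1 + 1 by ring, pow_succ,
      pow_succ, pow_succ c]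
    ring
  have e2 : x₁ * x₂ * (x₁ - 1 + (b + 1 - a)) * (x₂ - 1 + (a + b)) *
      Rn y a b c p (x₁ - 1) (x₂ - 1) = (-1) ^ (x₁ + x₂) * c ^ x₁ *
      (1 - c) ^ (b + 1 - a + (p : ℝ)) * poch (b + 1 - a) x₁ * poch (a + b) x₂ *
      ((x₁ * x₂ / c) * Rt y a b c p (x₁ - 1) (x₂ - 1)) := by
    cases x₁ with
    | zero => simp
    | succ x₁ =>
      cases x₂ with
      | zero => simp
      | succ x₂ =>
        simp only [Nat.add_sub_cancel]
        rw [Rn, poch_succ, poch_succ, show x₁ + 1 + (x₂ + 1) = x₁ + x₂ + 1 + 1 by ring, pow_succ,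
          pow_succ, pow_succ c]
        push_cast
        field_simp
        ring
  rw [e1, e2, Rn]
  linear_combination (-((-1) ^ (x₁ + x₂) * c ^ x₁ *
      (1 - c) ^ (b + 1 - a + (p : ℝ)) * poch (b + 1 - a) x₁ * poch (a + b) x₂)) * r

lemma cdHahn_special (x : ℕ) (y a b : ℝ) :
    cdHahn x y a b (1 - a - x) = (-1) ^ x * pr a y x := by
  rw [cdHahn_eq, Finset.sum_range_succ, sc_self, Finset.sum_eq_zero, zero_add]
  intro j hj
  rw [Finset.mem_range] at hj
  obtain ⟨r, rfl⟩ : ∃ r, x = j + (r + 1) := ⟨x - j - 1, by omega⟩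
  rw [sc_add, poch_succ (a + (1 - a - _) + _)]
  push_cast
  ring

lemma Rn_eq {a b c : ℝ} (y : ℝ) (h₁ : 0 < b + 1 - a) (h₂ : 0 < a + b) (hc0 : 0 < c)
    (hc : c < 1 / 2) (p : ℤ) (x₂ : ℕ) : ∀ x₁ : ℕ,
    Rn y a b c p x₁ x₂ = cdHahn x₂ y a b (1 - a + x₁ - x₂) *
      Ph (1 - a + p) y (p + 1 + x₂ - x₁) c := by
  induction x₂ using Nat.strong_induction_on with
  | _ x₂ ih =>
    intro x₁
    cases x₂ with
    | zero =>
      have := base_two (a := a) (b := b) (d := 1 - a + p) (y := y) (p := p + 1) (β := b + 1 - a)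
        (by push_cast; ring) h₁ (by push_cast; ring) hc0 hc x₁
      rw [cdHahn_zero, one_mul, Rn, Rt]
      simp only [meixner_zero_right, mul_one, poch_zero, add_zero, Nat.cast_zero]
      rw [← this, show b + (1 - a + (p : ℝ)) = b + 1 - a + p by ring]
      simp only [add_sub_cancel_right]
    | succ x₂ =>
      cases x₁ with
      | zero =>
        have := base_one (a := a) (b := b) (d := 1 - a + p) (y := y) (p := p + 1)
          (by push_cast; ring) h₂ hc0 hc (x₂ + 1)
        rw [Rn, Rt]
        simp only [meixner_zero_right, one_mul, mul_one, poch_zero, zero_add, Nat.cast_zero,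
          add_zero, sub_zero, pow_zero]
        rw [cdHahn_special, ← this, show b + (1 - a + (p : ℝ)) = b + 1 - a + p by ring]
      | succ x₁ =>
        rw [Rn_rec y h₁ h₂ hc0 hc, ih x₂ (by omega) x₁, cdHahn_rec]
        have e1 : (1 : ℝ) - a + (x₁ + 1 : ℕ) - (x₂ + 1 : ℕ) = 1 - a + x₁ - x₂ := by
          push_cast; ring
        have e2 : p + 1 + ((x₂ + 1 : ℕ) : ℤ) - ((x₁ + 1 : ℕ) : ℤ) = p + 1 + x₂ - x₁ := by
          push_cast; ring
        rw [e1, e2]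
        have e3 : (x₁ : ℝ) * x₂ * Rn y a b c p (x₁ - 1) (x₂ - 1) =
            x₁ * x₂ * (cdHahn (x₂ - 1) y a b (1 - a + x₁ - x₂) *
              Ph (1 - a + p) y (p + 1 + x₂ - x₁) c) := by
          cases x₁ with
          | zero => simp
          | succ x₁ =>
            cases x₂ with
            | zero => simp
            | succ x₂ =>
              simp only [Nat.add_sub_cancel]
              rw [ih x₂ (by omega) x₁]
              have e1 : (1 : ℝ) - a + (x₁ + 1 : ℕ) - (x₂ + 1 : ℕ) = 1 - a + x₁ - x₂ := by
                push_cast; ring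
              have e2 : p + 1 + ((x₂ + 1 : ℕ) : ℤ) - ((x₁ + 1 : ℕ) : ℤ) = p + 1 + x₂ - x₁ := by
                push_cast; ring
              rw [e1, e2]
        linear_combination (-((x₁ - 1 + (b + 1 - a)) * (x₂ - 1 + (a + b)))) * e3

/-- The general bilinear generating function for Meixner polynomials:
for `0 < k₁ ≤ k₂`, `0 < c < 1/2`, `x₁, x₂ ∈ ℕ`, `p ∈ ℤ`, `y ∈ ℝ`, both series converge
absolutely and
`S_{x₂}(y;k₂−k₁+1/2,k₁+k₂−1/2,k₁−k₂+x₁−x₂+1/2)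
  · ∑_{m=0}^∞ [∏_{l<m}((p+k₁−k₂+1/2+l)²+y)](c/(c−1))^m/(m! Γ(p+x₂−x₁+1+m))
  = ∑_{n=0}^∞ Cₙ S_n(y;k₂−k₁+1/2,k₁+k₂−1/2,k₁−k₂+p+1/2) M_{n+p}(x₁;2k₁,c) M_n(x₂;2k₂,c)`,
with `Cₙ = (−1)^{x₁+x₂} c^{n+x₁}(1−c)^{2k₁+p}(2k₁)_{x₁}(2k₂)_{x₂}/(n! Γ(n+p+1))`,
where `1/Γ` is `0` at non-positive integers (so summands with `n+p<0` vanish). -/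
theorem meixner_bilinear_generating_function (k₁ k₂ c : ℝ) (hk₁ : 0 < k₁) (hk : k₁ ≤ k₂)
    (hc0 : 0 < c) (hc1 : c < 1 / 2) (x₁ x₂ : ℕ) (p : ℤ) (y : ℝ) :
    Summable (fun m : ℕ => |(∏ l ∈ Finset.range m, ((p + k₁ - k₂ + 1 / 2 + l) ^ 2 + y)) *
        (c / (c - 1)) ^ m /
        ((m.factorial : ℝ) * Real.Gamma ((p : ℝ) + x₂ - x₁ + 1 + m))|) ∧
    Summable (fun n : ℕ =>
      |(-1 : ℝ) ^ (x₁ + x₂) * c ^ (n + x₁) * (1 - c) ^ (2 * k₁ + (p : ℝ)) *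
          poch (2 * k₁) x₁ * poch (2 * k₂) x₂ /
          ((n.factorial : ℝ) * Real.Gamma ((n : ℝ) + p + 1)) *
        cdHahn n y (k₂ - k₁ + 1 / 2) (k₁ + k₂ - 1 / 2) (k₁ - k₂ + p + 1 / 2) *
        meixner ((n : ℤ) + p).toNat x₁ (2 * k₁) c * meixner n x₂ (2 * k₂) c|) ∧
    cdHahn x₂ y (k₂ - k₁ + 1 / 2) (k₁ + k₂ - 1 / 2) (k₁ - k₂ + x₁ - x₂ + 1 / 2) *
      ∑' m : ℕ, (∏ l ∈ Finset.range m, ((p + k₁ - k₂ + 1 / 2 + l) ^ 2 + y)) *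
        (c / (c - 1)) ^ m /
        ((m.factorial : ℝ) * Real.Gamma ((p : ℝ) + x₂ - x₁ + 1 + m)) =
    ∑' n : ℕ,
      (-1 : ℝ) ^ (x₁ + x₂) * c ^ (n + x₁) * (1 - c) ^ (2 * k₁ + (p : ℝ)) *
          poch (2 * k₁) x₁ * poch (2 * k₂) x₂ /
          ((n.factorial : ℝ) * Real.Gamma ((n : ℝ) + p + 1)) *
        cdHahn n y (k₂ - k₁ + 1 / 2) (k₁ + k₂ - 1 / 2) (k₁ - k₂ + p + 1 / 2) *
        meixner ((n : ℤ) + p).toNat x₁ (2 * k₁) c * meixner n x₂ (2 * k₂) c := by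
  obtain ⟨a, ha⟩ : ∃ a : ℝ, a = k₂ - k₁ + 1 / 2 := ⟨_, rfl⟩
  obtain ⟨b, hb⟩ : ∃ b : ℝ, b = k₁ + k₂ - 1 / 2 := ⟨_, rfl⟩
  have h2k₁ : 2 * k₁ = b + 1 - a := by rw [ha, hb]; ring
  have h2k₂ : 2 * k₂ = a + b := by rw [ha, hb]; ring
  have hd : k₁ - k₂ + (p : ℝ) + 1 / 2 = 1 - a + p := by rw [ha]; ring
  have hd' : k₁ - k₂ + (x₁ : ℝ) - x₂ + 1 / 2 = 1 - a + x₁ - x₂ := by rw [ha]; ring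
  have hq : (p : ℝ) + k₁ - k₂ + 1 / 2 = 1 - a + p := by rw [ha]; ring
  have h₁ : 0 < b + 1 - a := by linarith
  have h₂ : 0 < a + b := by linarith
  rw [← ha, ← hb, h2k₁, h2k₂, hd, hd', hq]
  have e1 : ∀ m : ℕ, (∏ l ∈ Finset.range m, ((1 - a + (p : ℝ) + l) ^ 2 + y)) *
        (c / (c - 1)) ^ m /
        ((m.factorial : ℝ) * Real.Gamma ((p : ℝ) + x₂ - x₁ + 1 + m)) =
      pr (1 - a + p) y m * (c / (c - 1)) ^ m * ig (p + 1 + x₂ - x₁ + m) / (m.factorial : ℝ) := by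
    intro m
    rw [pr, ig]
    push_cast
    rw [show (p : ℝ) + x₂ - x₁ + 1 + m = p + 1 + x₂ - x₁ + m by ring, div_eq_mul_inv, mul_inv]
    ring
  have e2 : ∀ n : ℕ, (-1 : ℝ) ^ (x₁ + x₂) * c ^ (n + x₁) * (1 - c) ^ (b + 1 - a + (p : ℝ)) *
          poch (b + 1 - a) x₁ * poch (a + b) x₂ /
          ((n.factorial : ℝ) * Real.Gamma ((n : ℝ) + p + 1)) *
        cdHahn n y a b (1 - a + p) *
        meixner ((n : ℤ) + p).toNat x₁ (b + 1 - a) c * meixner n x₂ (a + b) c =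
      ((-1) ^ (x₁ + x₂) * c ^ x₁ * (1 - c) ^ (b + 1 - a + (p : ℝ)) * poch (b + 1 - a) x₁ *
        poch (a + b) x₂) * (En y a b (1 - a + p) (p + 1) n * c ^ n *
    (meixner ((n : ℤ) + p).toNat x₁ (b + 1 - a) c * meixner n x₂ (a + b) c)) := by
    intro n
    rw [En, ig]
    push_cast
    rw [show (n : ℝ) + p + 1 = p + 1 + n by ring, div_eq_mul_inv, mul_inv, pow_add c]
    ring
  simp only [e1, e2]
  refine ⟨(summable_pr _ _ _ ?_).abs, ((Rt_summable y h₂ hc0 hc1 p x₁ x₂).mul_left _).abs, ?_⟩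
  · rw [abs_div, abs_of_pos hc0, abs_of_neg (by linarith), div_lt_one (by linarith)]
    linarith
  · rw [tsum_mul_left]
    exact (Rn_eq y h₁ h₂ hc0 hc1 p x₂ x₁).symm
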